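/- Existence of typical subspace projectors. A quantum state on a finite-dimensional complex Hilbert space $H$ is a positive semidefinite operator $\rho$ on $H$ with $\operatorname{tr}\rho=1$; $S(\rho):=-\operatorname{tr}(\rho\log_2\rho)$ is its von Neumann entropy (with $0\log_2 0:=0$), $\rho^{\otimes n}$ is its $n$-fold tensor power on $H^{\otimes n}$, and $X\le Y$ means that $Y-X$ is positive semidefinite. There is a universal constant $K>0$ such that for every finite-dimensional complex Hilbert space $H$ with $d:=\dim H$, every quantum state $\rho$ on $H$, every $n\in\mathbb{N}$ with $n\ge 1$, and every $\alpha>0$, there exists an orthogonal projection $\Pi$ on $H^{\otimes n}$ commuting with $\rho^{\otimes n}$ and satisfying: (i) $\operatorname{tr}(\rho^{\otimes n}\Pi)\ge 1-\frac{d}{4\alpha^2}$; (ii) $\operatorname{tr}(\Pi)\le 2^{nS(\rho)+Kd\alpha\sqrt n}$; (iii) $\Pi\rho^{\otimes n}\Pi\le 2^{-nS(\rho)+Kd\alpha\sqrt n}\,\Pi$. -/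

import Mathlib

open scoped ComplexOrder MatrixOrder

/-- A quantum state on the Hilbert space with orthonormal basis indexed by `ι`:
a positive semidefinite operator with unit trace. -/
def IsState {ι : Type*} [Fintype ι] (ρ : Matrix ι ι ℂ) : Prop :=
  ρ.PosSemidef ∧ ρ.trace = 1

/-- The von Neumann entropy `S(ρ) = -tr(ρ log₂ ρ)`. The operator `log₂ ρ` is given by the functional
calculus; since `Real.logb 2 0 = 0`, the convention `0 log₂ 0 = 0` holds. -/
noncomputable def vnEntropy {ι : Type*} [Fintype ι] [DecidableEq ι] (ρ : Matrix ι ι ℂ) : ℝ :=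
  -(ρ * cfc (Real.logb 2) ρ).trace.re

/-- The tensor power `ρ^{⊗n}`, as a matrix in the product basis
`e_{i 0} ⊗ ⋯ ⊗ e_{i (n-1)}` of `H^{⊗n}`, indexed by `i : Fin n → ι`. -/
def tensorPow {ι : Type*} (n : ℕ) (ρ : Matrix ι ι ℂ) : Matrix (Fin n → ι) (Fin n → ι) ℂ :=
  Matrix.of fun i j => ∏ k, ρ (i k) (j k)

/-!
`Π` is the spectral projection of `ρ^{⊗n}` onto its eigenvalues between `2 ^ (-n S(ρ) - δ)` and
`2 ^ (-n S(ρ) + δ)`, where `δ = 6 α √n`. The upper end of this window is (iii); the lower end gives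
`2 ^ (-n S(ρ) - δ) • Π ≤ ρ^{⊗n}`, whose trace is (ii). The eigenvalues of `ρ^{⊗n}` are the products
of `n` eigenvalues of `ρ`, so `tr (ρ^{⊗n} Π)` is at least the probability that `n` independent
samples from the spectrum `p` of `ρ` have `∑ log₂ p` within `δ` of its mean `-n S(ρ)`. As
`x (log₂ x)² ≤ 9` on `[0, 1]`, the variance of `log₂ p` is at most `9 d`, and (i) is Chebyshev's
inequality.
-/

open Finset Matrix MeasureTheory ProbabilityTheory

section SpectralProjection

variable {κ 𝕜 : Type*} [Fintype κ] [DecidableEq κ] [RCLike 𝕜] {A : Matrix κ κ 𝕜} {s : Set ℝ}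
  {a b : ℝ}

/-- The spectral projection of a Hermitian matrix `A` onto the sum of its eigenspaces with
eigenvalue in `s`. For `A` not Hermitian it is `0`, the junk value of the functional calculus. -/
noncomputable def spectralProjection (s : Set ℝ) (A : Matrix κ κ 𝕜) : Matrix κ κ 𝕜 :=
  cfc (s.indicator 1 : ℝ → ℝ) A

theorem continuousOn_real_spectrum (f : ℝ → ℝ) (A : Matrix κ κ 𝕜) :
    ContinuousOn f (spectrum ℝ A) :=
  A.finite_real_spectrum.continuousOn f

theorem isStarProjection_spectralProjection (s : Set ℝ) (A : Matrix κ κ 𝕜) :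
    IsStarProjection (spectralProjection s A) where
  isIdempotentElem := by
    have hcont := continuousOn_real_spectrum (s.indicator 1) A
    rw [IsIdempotentElem, spectralProjection, ← cfc_mul _ _ A hcont hcont]
    simp only [← Set.indicator_mul, Pi.one_apply, mul_one]
    rfl
  isSelfAdjoint := cfc_predicate _ A

theorem spectralProjection_commute (hA : A.IsHermitian) (s : Set ℝ) :
    Commute (spectralProjection s A) A := by
  have hcomm := cfc_commute_cfc (s.indicator 1) (id : ℝ → ℝ) A
  rwa [cfc_id ℝ A hA.isSelfAdjoint] at hcomm

theorem mul_spectralProjection (hA : A.IsHermitian) (s : Set ℝ) :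
    A * spectralProjection s A = cfc (s.indicator id) A := by
  have hmul := cfc_mul (id : ℝ → ℝ) (s.indicator 1) A (continuousOn_real_spectrum _ A)
    (continuousOn_real_spectrum _ A)
  rw [cfc_id ℝ A hA.isSelfAdjoint] at hmul
  rw [spectralProjection, ← hmul]
  congr 1
  ext x
  by_cases hx : x ∈ s <;> simp [hx]

theorem spectralProjection_mul_mul_self (hA : A.IsHermitian) (s : Set ℝ) :
    spectralProjection s A * A * spectralProjection s A = A * spectralProjection s A := by
  rw [(spectralProjection_commute hA s).eq, mul_assoc,
    (isStarProjection_spectralProjection s A).isIdempotentElem.eq]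

theorem smul_spectralProjection_le (hA : A.PosSemidef) (hs : ∀ x ∈ s, a ≤ x) :
    a • spectralProjection s A ≤ A := by
  have hcont := continuousOn_real_spectrum (s.indicator 1) A
  rw [spectralProjection, ← cfc_const_mul a _ A hcont]
  conv_rhs => rw [← cfc_id ℝ A hA.isHermitian.isSelfAdjoint]
  refine cfc_mono (fun x hx => ?_) (continuousOn_real_spectrum _ A)
  by_cases hxs : x ∈ s
  · simpa [hxs] using hs x hxs
  · simpa [hxs] using spectrum_nonneg_of_nonneg (nonneg_iff_posSemidef.mpr hA) hx

theorem spectralProjection_mul_mul_self_le (hA : A.IsHermitian) (hs : ∀ x ∈ s, x ≤ b) :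
    spectralProjection s A * A * spectralProjection s A ≤ b • spectralProjection s A := by
  have hcont := continuousOn_real_spectrum (s.indicator 1) A
  rw [spectralProjection_mul_mul_self hA, mul_spectralProjection hA, spectralProjection,
    ← cfc_const_mul b _ A hcont]
  refine cfc_mono (fun x _ => ?_) (continuousOn_real_spectrum _ A) (continuousOn_real_spectrum _ A)
  by_cases hxs : x ∈ s
  · simpa [hxs] using hs x hxs
  · simp [hxs]

open Polynomial in
theorem trace_cfc_of_charpoly_eq (hA : A.IsHermitian) {v : κ → ℝ}
    (hv : A.charpoly = ∏ i, (X - C (v i : 𝕜))) (f : ℝ → ℝ) :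
    (cfc f A).trace = ((∑ i, f (v i) : ℝ) : 𝕜) := by
  have hroots : A.charpoly.roots = univ.val.map fun i => (v i : 𝕜) := by
    rw [hv, roots_prod _ _ (by simp [prod_ne_zero_iff, X_sub_C_ne_zero])]
    simp
  have heigenvalues : univ.val.map hA.eigenvalues = univ.val.map v := by
    have hmap := congrArg (Multiset.map RCLike.re)
      (hA.roots_charpoly_eq_eigenvalues.symm.trans hroots)
    simpa [Multiset.map_map, Function.comp_def] using hmap
  have htrace : (cfc f A).trace = ∑ i, (f (hA.eigenvalues i) : 𝕜) := by
    rw [hA.cfc_eq, IsHermitian.cfc, Unitary.conjStarAlgAut_apply, trace_mul_comm, ← mul_assoc,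
      Unitary.coe_star_mul_self, one_mul, trace_diagonal]
    rfl
  have hsum := congrArg (fun m => (m.map f).sum) heigenvalues
  simp only [Multiset.map_map] at hsum
  rw [htrace, ← RCLike.ofReal_sum]
  exact congrArg _ hsum

end SpectralProjection

section TensorPower

variable {ι : Type*} (n : ℕ)

theorem tensorPow_mul [Fintype ι] (A B : Matrix ι ι ℂ) :
    tensorPow n (A * B) = tensorPow n A * tensorPow n B := by
  classical
  ext i j
  simp only [tensorPow, of_apply, mul_apply, prod_univ_sum, Fintype.piFinset_univ,
    prod_mul_distrib]

theorem tensorPow_conjTranspose (A : Matrix ι ι ℂ) : tensorPow n Aᴴ = (tensorPow n A)ᴴ := by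
  ext i j
  simp [tensorPow]

theorem tensorPow_diagonal [DecidableEq ι] (v : ι → ℂ) :
    tensorPow n (diagonal v) = diagonal fun x : Fin n → ι => ∏ k, v (x k) := by
  ext x y
  by_cases hxy : x = y
  · simp [tensorPow, hxy]
  · obtain ⟨k, hk⟩ := Function.ne_iff.mp hxy
    rw [diagonal_apply_ne _ hxy]
    exact prod_eq_zero (mem_univ k) (diagonal_apply_ne _ hk)

theorem posSemidef_tensorPow [Finite ι] {A : Matrix ι ι ℂ} (hA : A.PosSemidef) :
    (tensorPow n A).PosSemidef := by
  classical
  cases nonempty_fintype ι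
  obtain ⟨B, rfl⟩ := CStarAlgebra.nonneg_iff_eq_star_mul_self.mp hA.nonneg
  rw [star_eq_conjTranspose, tensorPow_mul, tensorPow_conjTranspose]
  exact posSemidef_conjTranspose_mul_self _

variable [Fintype ι]

theorem trace_tensorPow (A : Matrix ι ι ℂ) : (tensorPow n A).trace = A.trace ^ n := by
  simp [tensorPow, trace, Fintype.sum_pow]

theorem IsState.tensorPow {ρ : Matrix ι ι ℂ} (hρ : IsState ρ) : IsState (tensorPow n ρ) :=
  ⟨posSemidef_tensorPow n hρ.1, by rw [trace_tensorPow, hρ.2, one_pow]⟩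

open Polynomial in
theorem charpoly_tensorPow [DecidableEq ι] {A : Matrix ι ι ℂ} (hA : A.IsHermitian) :
    (tensorPow n A).charpoly =
      ∏ x : Fin n → ι, (X - C ((∏ k, hA.eigenvalues (x k) : ℝ) : ℂ)) := by
  conv_lhs =>
    rw [hA.spectral_theorem, Unitary.conjStarAlgAut_apply, tensorPow_mul, charpoly_mul_comm,
      ← tensorPow_mul, ← mul_assoc, Unitary.coe_star_mul_self, one_mul, tensorPow_diagonal]
  simp [charpoly_diagonal]

end TensorPower

section ProductDistribution

theorem measureReal_pi_le_abs_sum_sub_le {Ω κ : Type*} [MeasurableSpace Ω] [Fintype κ]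
    {μ : Measure Ω} [IsProbabilityMeasure μ] {X : Ω → ℝ} (hX : MemLp X 2 μ) {δ : ℝ} (hδ : 0 < δ) :
    (Measure.pi fun _ : κ => μ).real {x | δ ≤ |∑ k, X (x k) - Fintype.card κ * μ[X]|} ≤
      Fintype.card κ * Var[X; μ] / δ ^ 2 := by
  set ν := Measure.pi fun _ : κ => μ
  have hmem (k : κ) : MemLp (fun x : κ → Ω => X (x k)) 2 ν :=
    hX.comp_measurePreserving (measurePreserving_eval (fun _ : κ => μ) k)
  have hmean : ∫ x, ∑ k, X (x k) ∂ν = Fintype.card κ * μ[X] := by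
    rw [integral_finsetSum _ fun k _ => (hmem k).integrable one_le_two]
    simp [ν, integral_comp_eval (μ := fun _ : κ => μ) hX.aestronglyMeasurable]
  have hvar : Var[fun x => ∑ k, X (x k); ν] = Fintype.card κ * Var[X; μ] := by
    have hsum := variance_sum_pi (ι := κ) (μ := fun _ => μ) (X := fun _ => X) fun _ => hX
    rw [sum_fn] at hsum
    simpa using hsum
  have hchebyshev :=
    meas_ge_le_variance_div_sq (memLp_finsetSum _ fun k (_ : k ∈ univ) => hmem k) hδ
  rw [hmean, hvar] at hchebyshev
  have := variance_nonneg X μ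
  exact ENNReal.toReal_le_of_le_ofReal (by positivity) hchebyshev

variable {ι κ : Type*} [Fintype ι] [Fintype κ] {p : ι → ℝ}

theorem sum_prod_filter_le_abs_sum_sub_le [DecidableEq κ] (hp : p ∈ stdSimplex ℝ ι) (f : ι → ℝ)
    {δ : ℝ} (hδ : 0 < δ) :
    ∑ x : κ → ι with δ ≤ |∑ k, f (x k) - Fintype.card κ * ∑ i, p i * f i|, ∏ k, p (x k) ≤
      Fintype.card κ * (∑ i, p i * f i ^ 2) / δ ^ 2 := by
  let : MeasurableSpace ι := ⊤
  let μ : Measure ι := (PMF.ofFintype (fun i => ENNReal.ofReal (p i)) (by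
    rw [← ENNReal.ofReal_sum_of_nonneg fun i _ => hp.1 i, hp.2, ENNReal.ofReal_one])).toMeasure
  have hμ (i : ι) : μ.real {i} = p i := by
    rw [measureReal_def, PMF.toMeasure_apply_singleton _ _ (.singleton i), PMF.ofFintype_apply,
      ENNReal.toReal_ofReal (hp.1 i)]
  have hpi (x : κ → ι) : (Measure.pi fun _ : κ => μ).real {x} = ∏ k, p (x k) := by
    simp [measureReal_def, ENNReal.toReal_prod, ← hμ]
  have hexp (g : ι → ℝ) : μ[g] = ∑ i, p i * g i := by
    simp [integral_fintype Integrable.of_finite, hμ]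
  have hchebyshev := measureReal_pi_le_abs_sum_sub_le (κ := κ) (μ := μ) (X := f) .of_discrete hδ
  have hvar : Var[f; μ] ≤ ∑ i, p i * f i ^ 2 :=
    (variance_le_expectation_sq .of_discrete).trans_eq (hexp _)
  calc ∑ x : κ → ι with δ ≤ |∑ k, f (x k) - Fintype.card κ * ∑ i, p i * f i|, ∏ k, p (x k)
      = (Measure.pi fun _ : κ => μ).real
          {x | δ ≤ |∑ k, f (x k) - Fintype.card κ * μ[f]|} := by
        simp only [← hpi, sum_measureReal_singleton, coe_filter_univ, hexp]
    _ ≤ Fintype.card κ * Var[f; μ] / δ ^ 2 := hchebyshev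
    _ ≤ Fintype.card κ * (∑ i, p i * f i ^ 2) / δ ^ 2 := by gcongr

end ProductDistribution

section Entropy

variable {ι : Type*} [Fintype ι] {ρ : Matrix ι ι ℂ}

theorem mul_logb_two_sq_le {x : ℝ} (h₀ : 0 ≤ x) (h₁ : x ≤ 1) : x * Real.logb 2 x ^ 2 ≤ 9 := by
  rcases h₀.eq_or_lt with rfl | hx
  · simp
  have habs : |Real.log x * √x| ≤ 2 := by
    have hlt := Real.abs_log_mul_self_rpow_lt x (1 / 2) hx h₁ (by norm_num)
    rw [← Real.sqrt_eq_rpow] at hlt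
    linarith
  have hlog : x * Real.log x ^ 2 ≤ 2 ^ 2 := by
    have hsq := sq_le_sq' (neg_le_of_abs_le habs) (le_of_abs_le habs)
    rwa [mul_pow, Real.sq_sqrt h₀, mul_comm] at hsq
  have hlog_two : (2 / 3 : ℝ) ≤ Real.log 2 := by linarith [Real.log_two_gt_d9]
  rw [Real.logb, div_pow, ← mul_div_assoc, div_le_iff₀ (by positivity)]
  nlinarith

theorem sum_mul_logb_two_sq_le {p : ι → ℝ} (hp : p ∈ stdSimplex ℝ ι) :
    ∑ i, p i * Real.logb 2 (p i) ^ 2 ≤ 9 * Fintype.card ι := by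
  refine (sum_le_card_nsmul univ _ 9 fun i _ => ?_).trans_eq (by simp [mul_comm])
  exact mul_logb_two_sq_le (hp.1 i) (mem_Icc_of_mem_stdSimplex hp i).2

theorem IsState.nonempty (hρ : IsState ρ) : Nonempty ι := by
  by_contra hι
  rw [not_nonempty_iff] at hι
  simpa using hρ.2

variable [DecidableEq ι]

theorem IsState.eigenvalues_mem_stdSimplex (hρ : IsState ρ) :
    hρ.1.isHermitian.eigenvalues ∈ stdSimplex ℝ ι := by
  refine ⟨hρ.1.eigenvalues_nonneg, ?_⟩
  have htrace := hρ.2.symm.trans hρ.1.isHermitian.trace_eq_sum_eigenvalues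
  simpa using congrArg Complex.re htrace.symm

theorem vnEntropy_eq_neg_sum (hρ : ρ.IsHermitian) :
    vnEntropy ρ = -∑ i, hρ.eigenvalues i * Real.logb 2 (hρ.eigenvalues i) := by
  have hmul := cfc_mul (id : ℝ → ℝ) (Real.logb 2) ρ (continuousOn_real_spectrum _ ρ)
    (continuousOn_real_spectrum _ ρ)
  rw [cfc_id ℝ ρ hρ.isSelfAdjoint] at hmul
  rw [vnEntropy, ← hmul, trace_cfc_of_charpoly_eq hρ hρ.charpoly_eq]
  simp

end Entropy

section TypicalProjector

/-- The probabilities within a factor `2 ^ δ` of `2 ^ (-c)`; for `c` the entropy of `n` independent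
samples this is the window defining weakly typical sequences. -/
def typicalWindow (c δ : ℝ) : Set ℝ :=
  Set.Icc (2 ^ (-(c + δ))) (2 ^ (-c + δ))

theorem mem_typicalWindow_iff {x c δ : ℝ} (hx : 0 < x) :
    x ∈ typicalWindow c δ ↔ |Real.logb 2 x + c| ≤ δ := by
  rw [typicalWindow, Set.mem_Icc, ← Real.le_logb_iff_rpow_le one_lt_two hx,
    ← Real.logb_le_iff_le_rpow one_lt_two hx, abs_le]
  constructor <;> rintro ⟨_, _⟩ <;> constructor <;> linarith

variable {ι : Type*} [Fintype ι] {n : ℕ} {δ : ℝ}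

theorem one_sub_le_sum_indicator_typicalWindow {p : ι → ℝ} (hp : p ∈ stdSimplex ℝ ι) (n : ℕ)
    (hδ : 0 < δ) :
    1 - n * (∑ i, p i * Real.logb 2 (p i) ^ 2) / δ ^ 2 ≤
      ∑ x : Fin n → ι, (typicalWindow (n * -∑ i, p i * Real.logb 2 (p i)) δ).indicator id
        (∏ k, p (x k)) := by
  set c := n * -∑ i, p i * Real.logb 2 (p i) with hc
  have hchebyshev := sum_prod_filter_le_abs_sum_sub_le (κ := Fin n) hp (Real.logb 2 ∘ p) hδ
  simp only [Function.comp_apply, Fintype.card_fin, sum_filter] at hchebyshev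
  have hsplit (x : Fin n → ι) : ∏ k, p (x k) ≤
      (typicalWindow c δ).indicator id (∏ k, p (x k)) +
        if δ ≤ |∑ k, Real.logb 2 (p (x k)) - n * ∑ i, p i * Real.logb 2 (p i)|
          then ∏ k, p (x k) else 0 := by
    have hprod₀ : 0 ≤ ∏ k, p (x k) := prod_nonneg fun k _ => hp.1 _
    have hindicator : 0 ≤ (typicalWindow c δ).indicator id (∏ k, p (x k)) :=
      Set.indicator_apply_nonneg fun _ => hprod₀
    split_ifs with hx
    · exact le_add_of_nonneg_left hindicator
    rcases hprod₀.eq_or_lt with hprod | hprod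
    · simpa [← hprod] using hindicator
    have hmem : ∏ k, p (x k) ∈ typicalWindow c δ := by
      rw [mem_typicalWindow_iff hprod, Real.logb_prod _ _ (prod_ne_zero_iff.mp hprod.ne'), hc,
        mul_neg, ← sub_eq_add_neg]
      exact (not_le.mp hx).le
    simp [hmem]
  have htotal := sum_le_sum fun x (_ : x ∈ univ) => hsplit x
  rw [sum_add_distrib, ← Fintype.sum_pow, hp.2, one_pow] at htotal
  linarith

variable [DecidableEq ι] {ρ : Matrix ι ι ℂ}

/-- The typical projector of `ρ^{⊗n}` at width `δ`: the spectral projection onto the eigenvalues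
within a factor `2 ^ δ` of `2 ^ (-n S(ρ))`. -/
noncomputable def typicalProjector (n : ℕ) (δ : ℝ) (ρ : Matrix ι ι ℂ) :
    Matrix (Fin n → ι) (Fin n → ι) ℂ :=
  spectralProjection (typicalWindow (n * vnEntropy ρ) δ) (tensorPow n ρ)

theorem trace_typicalProjector_le (hρ : IsState ρ) (n : ℕ) (δ : ℝ) :
    (typicalProjector n δ ρ).trace.re ≤ 2 ^ (n * vnEntropy ρ + δ) := by
  have hle : (2 : ℝ) ^ (-(n * vnEntropy ρ + δ)) • typicalProjector n δ ρ ≤ tensorPow n ρ :=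
    smul_spectralProjection_le (hρ.tensorPow n).1 fun _ hx => hx.1
  have htrace :=
    (Complex.le_def.mp (OrderHomClass.mono (tracePositiveLinearMap (Fin n → ι) ℂ ℂ) hle)).1
  rw [tracePositiveLinearMap_apply, tracePositiveLinearMap_apply, (hρ.tensorPow n).2, trace_smul,
    Complex.smul_re, Complex.one_re, smul_eq_mul, Real.rpow_neg zero_le_two,
    inv_mul_le_one₀ (by positivity)] at htrace
  exact htrace

theorem one_sub_le_trace_tensorPow_mul_typicalProjector (hρ : IsState ρ) (n : ℕ) (hδ : 0 < δ) :
    1 - n * (∑ i, hρ.1.isHermitian.eigenvalues i *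
        Real.logb 2 (hρ.1.isHermitian.eigenvalues i) ^ 2) / δ ^ 2 ≤
      (tensorPow n ρ * typicalProjector n δ ρ).trace.re := by
  have hρn := (hρ.tensorPow n).1.isHermitian
  rw [typicalProjector, mul_spectralProjection hρn,
    trace_cfc_of_charpoly_eq hρn (charpoly_tensorPow n hρ.1.isHermitian),
    vnEntropy_eq_neg_sum hρ.1.isHermitian]
  exact one_sub_le_sum_indicator_typicalWindow hρ.eigenvalues_mem_stdSimplex n hδ

theorem typical_projector_general (hρ : IsState ρ) (hn : 1 ≤ n) {α : ℝ} (hα : 0 < α) :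
    ∃ E : Matrix (Fin n → ι) (Fin n → ι) ℂ,
      IsStarProjection E ∧
      Commute E (tensorPow n ρ) ∧
      1 - Fintype.card ι / (4 * α ^ 2) ≤ (tensorPow n ρ * E).trace.re ∧
      E.trace.re ≤ 2 ^ (n * vnEntropy ρ + 6 * α * √n) ∧
      E * tensorPow n ρ * E ≤ (2 : ℝ) ^ (-(n * vnEntropy ρ) + 6 * α * √n) • E := by
  have hρn := (hρ.tensorPow n).1.isHermitian
  refine ⟨typicalProjector n (6 * α * √n) ρ, isStarProjection_spectralProjection _ _,
    spectralProjection_commute hρn _, ?_, trace_typicalProjector_le hρ n _,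
    spectralProjection_mul_mul_self_le hρn fun _ hx => hx.2⟩
  have hn₀ : (0 : ℝ) < n := by exact_mod_cast hn
  calc 1 - Fintype.card ι / (4 * α ^ 2)
      = 1 - n * (9 * Fintype.card ι) / (6 * α * √n) ^ 2 := by
        rw [mul_pow, mul_pow, Real.sq_sqrt hn₀.le]
        field_simp
        ring
    _ ≤ 1 - n * (∑ i, hρ.1.isHermitian.eigenvalues i *
          Real.logb 2 (hρ.1.isHermitian.eigenvalues i) ^ 2) / (6 * α * √n) ^ 2 := by
        gcongr
        exact sum_mul_logb_two_sq_le hρ.eigenvalues_mem_stdSimplex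
    _ ≤ _ := one_sub_le_trace_tensorPow_mul_typicalProjector hρ n (by positivity)

end TypicalProjector

/-- Existence of typical subspace projectors. The inequality `≤` between matrices is the Loewner
order: `A ≤ B` means that `B - A` is positive semidefinite. -/
theorem typical_projector :
    ∃ K : ℝ, 0 < K ∧
      ∀ (d : ℕ) (ρ : Matrix (Fin d) (Fin d) ℂ), IsState ρ →
      ∀ n : ℕ, 1 ≤ n → ∀ α : ℝ, 0 < α →
      ∃ E : Matrix (Fin n → Fin d) (Fin n → Fin d) ℂ,
        IsStarProjection E ∧
        Commute E (tensorPow n ρ) ∧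
        1 - (d : ℝ) / (4 * α ^ 2) ≤ (tensorPow n ρ * E).trace.re ∧
        E.trace.re ≤ (2 : ℝ) ^ ((n : ℝ) * vnEntropy ρ + K * d * α * Real.sqrt n) ∧
        E * tensorPow n ρ * E ≤
          (2 : ℝ) ^ (-((n : ℝ) * vnEntropy ρ) + K * d * α * Real.sqrt n) • E := by
  refine ⟨6, by norm_num, fun d ρ hρ n hn α hα => ?_⟩
  have hd : (1 : ℝ) ≤ d := by
    have := hρ.nonempty
    exact_mod_cast Fin.pos_iff_nonempty.mpr this
  obtain ⟨E, hE, hcomm, hprob, htrace, hle⟩ :=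
    typical_projector_general hρ hn (α := d * α) (by positivity)
  rw [Fintype.card_fin] at hprob
  simp only [← mul_assoc] at htrace hle
  refine ⟨E, hE, hcomm, hprob.trans' ?_, htrace, hle⟩
  gcongr
  exact le_mul_of_one_le_left hα.le hd
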